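/- Let δ > 0 and 0 < a < 1, assume p ≥ 2, and let Pen : 𝓜 → ℝ be a penalty satisfying Pen(M) ≥ (4σ²(δ+1)/(a ν_r²)) ‖Ψ_M‖_F² ln p for every M ∈ 𝓜. Let M̂ ∈ 𝓜 be any minimizer over 𝓜 of ‖z − f̂_M‖² + Pen(M). Then with probability at least 1 − √(2/π) p^{−δ}, one has ‖f̂_{M̂} − f‖² ≤ ((1+a)/(1−a)) · min_{M ∈ 𝓜} { ‖f_M − f‖² + ((a² + a + 4)/(2(1+a))) Pen(M) }. -/

import Mathlib

open MeasureTheory ProbabilityTheory Matrix Finset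

noncomputable section

/-- Squared Euclidean norm of a vector in `ℝ^k`. -/
def sqnorm {k : ℕ} (v : Fin k → ℝ) : ℝ := ∑ i, v i ^ 2

/-- Euclidean inner product on `ℝ^k`. -/
def ip {k : ℕ} (u v : Fin k → ℝ) : ℝ := ∑ i, u i * v i

/-- The `j`-th column of a matrix. -/
def colv {a b : ℕ} (B : Matrix (Fin a) (Fin b) ℝ) (j : Fin b) : Fin a → ℝ := fun i => B i j

/-- The matrix `B_M`: the columns of `B` outside `M` are replaced by zero. -/
def restr {a b : ℕ} (B : Matrix (Fin a) (Fin b) ℝ) (M : Finset (Fin b)) :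
    Matrix (Fin a) (Fin b) ℝ := fun i j => if j ∈ M then B i j else 0

/-- Squared Frobenius norm of a matrix. -/
def frob2 {a b : ℕ} (B : Matrix (Fin a) (Fin b) ℝ) : ℝ := ∑ j, sqnorm (colv B j)

/-- `x` has at most `r` nonzero coordinates. -/
def sparse {k : ℕ} (r : ℕ) (x : Fin k → ℝ) : Prop := (Function.support x).ncard ≤ r

/-- `H` is the orthogonal projection matrix of `ℝ^m` onto `span{φ_j : j ∈ M}`:
symmetric, idempotent, with range equal to the span of the columns of `Φ` indexed by `M`. -/
def IsProjOnto {m p : ℕ} (Φ : Matrix (Fin m) (Fin p) ℝ) (M : Finset (Fin p))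
    (H : Matrix (Fin m) (Fin m) ℝ) : Prop :=
  H.IsSymm ∧ H * H = H ∧
    LinearMap.range H.mulVecLin = Submodule.span ℝ (colv Φ '' (M : Set (Fin p)))

/-- `Ψ = A (AᵀA)⁻¹ Φ`. -/
def Psi {n m p : ℕ} (A : Matrix (Fin n) (Fin m) ℝ) (Φ : Matrix (Fin m) (Fin p) ℝ) :
    Matrix (Fin n) (Fin p) ℝ := A * (Aᵀ * A)⁻¹ * Φ

/-- `z = (AᵀA)⁻¹ Aᵀ y` where `y = A f + σ e`. -/
def zv {n m : ℕ} (A : Matrix (Fin n) (Fin m) ℝ) (f : Fin m → ℝ) (σ : ℝ) (e : Fin n → ℝ) :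
    Fin m → ℝ := ((Aᵀ * A)⁻¹ * Aᵀ).mulVec (A.mulVec f + σ • e)

/-- `ξ = (AᵀA)⁻¹ Aᵀ e`. -/
def xiv {n m : ℕ} (A : Matrix (Fin n) (Fin m) ℝ) (e : Fin n → ℝ) : Fin m → ℝ :=
  ((Aᵀ * A)⁻¹ * Aᵀ).mulVec e

/-- The collection `𝓜` of models of size at most `r/2`. -/
def models (p r : ℕ) : Finset (Finset (Fin p)) := Finset.univ.filter fun M => 2 * M.card ≤ r

open scoped Classical in
/-- The restricted collection `𝓜_γ = {M ∈ 𝓜 : ‖Ψ_M‖_F² ≤ γ²n}`. -/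
def modelsG {n m p : ℕ} (r : ℕ) (A : Matrix (Fin n) (Fin m) ℝ) (Φ : Matrix (Fin m) (Fin p) ℝ)
    (γ : ℝ) : Finset (Finset (Fin p)) :=
  Finset.univ.filter fun M => 2 * M.card ≤ r ∧ frob2 (restr (Psi A Φ) M) ≤ γ ^ 2 * (n : ℝ)

/-- The aggregated estimator `f̂_θ = ∑_{M ∈ C} θ_M f̂_M`, where `f̂_M = H_M z`. -/
def aggEst {m p : ℕ} (C : Finset (Finset (Fin p)))
    (H : Finset (Fin p) → Matrix (Fin m) (Fin m) ℝ) (zvec : Fin m → ℝ)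
    (θ : Finset (Fin p) → ℝ) : Fin m → ℝ :=
  ∑ M ∈ C, θ M • (H M).mulVec zvec

/-- The penalty `U_M = 4σ²(δ+1)ν_r⁻² ‖Ψ_M‖_F² ln p`. -/
def Ufun {n m p : ℕ} (A : Matrix (Fin n) (Fin m) ℝ) (Φ : Matrix (Fin m) (Fin p) ℝ)
    (σ δ ν2 : ℝ) (M : Finset (Fin p)) : ℝ :=
  4 * σ ^ 2 * (δ + 1) / ν2 * frob2 (restr (Psi A Φ) M) * Real.log p

/-- The Q-aggregation criterion (with `α = 1/2`, multiplied by 2):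
`∑_M θ_M (‖z - f̂_M‖² + 2U_M) + ‖z - f̂_θ‖²`. -/
def aggCrit {m p : ℕ} (C : Finset (Finset (Fin p)))
    (H : Finset (Fin p) → Matrix (Fin m) (Fin m) ℝ) (zvec : Fin m → ℝ)
    (U : Finset (Fin p) → ℝ) (θ : Finset (Fin p) → ℝ) : ℝ :=
  ∑ M ∈ C, θ M * (sqnorm (zvec - (H M).mulVec zvec) + 2 * U M) +
    sqnorm (zvec - aggEst C H zvec θ)

/-!
The noise enters the risk only through the correlations `⟨ψ_j, ε⟩ ∼ N(0, ‖ψ_j‖²)`, so a Gaussian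
tail bound and a union bound over the `p` columns show that, with the stated probability, all of
them are at most `t = √(2(δ+1) ln p)` standard deviations.

On that event the argument is deterministic. Comparing the criterion at `M̂` with its value at `M`
leaves the cross term `2σ⟨ξ, f̂_{M̂} - f_M⟩`. Since `f̂_{M̂} - f_M = Φx` with `x` supported on
`M̂ ∪ M`, hence `r`-sparse, Cauchy–Schwarz gives `⟨ξ, Φx⟩² ≤ ‖Φx‖² t² ‖Ψ_{M̂ ∪ M}‖_F² / ν_r²`.
By AM-GM the cross term is at most `(a/2)‖f̂_{M̂} - f_M‖² + Pen(M̂) + Pen(M)`: `Pen(M̂)` cancels,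
and the squared distance is absorbed in the two risks.
-/

open Real
open scoped NNReal Topology

section GaussianTail

lemma hasDerivAt_gaussianPDFReal (m : ℝ) (v : ℝ≥0) (x : ℝ) :
    HasDerivAt (gaussianPDFReal m v) (-((x - m) / v * gaussianPDFReal m v x)) x := by
  have hexponent : HasDerivAt (fun y : ℝ ↦ -(y - m) ^ 2 / (2 * v)) (-((x - m) / v)) x := by
    refine ((((hasDerivAt_id x).sub_const m).pow 2).neg.div_const (2 * (v : ℝ))).congr_deriv ?_
    simp only [id, Nat.cast_ofNat]
    ring
  refine (hexponent.exp.const_mul (√(2 * π * v))⁻¹).congr_deriv ?_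
  simp only [gaussianPDFReal]
  ring

lemma tendsto_gaussianPDFReal_atTop (m : ℝ) (v : ℝ≥0) :
    Filter.Tendsto (gaussianPDFReal m v) Filter.atTop (𝓝 0) := by
  obtain rfl | hv := eq_or_ne v 0
  · rw [gaussianPDFReal_zero_var]
    exact tendsto_const_nhds
  have hsq : Filter.Tendsto (fun x : ℝ ↦ (x - m) ^ 2 / (2 * v)) Filter.atTop Filter.atTop :=
    ((Filter.tendsto_pow_atTop two_ne_zero).comp
      (Filter.tendsto_atTop_add_const_right _ (-m) Filter.tendsto_id)).atTop_div_const
      (by positivity)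
  simpa [gaussianPDFReal_def, Function.comp_def, neg_div] using
    (Real.tendsto_exp_neg_atTop_nhds_zero.comp hsq).const_mul (√(2 * π * v))⁻¹

lemma gaussianReal_Ioi_le (m : ℝ) {v : ℝ≥0} (hv : v ≠ 0) {s : ℝ} (hs : 0 < s) :
    gaussianReal m v (Set.Ioi (m + s)) ≤
      ENNReal.ofReal (v / s * gaussianPDFReal m v (m + s)) := by
  let F : ℝ → ℝ := fun x ↦ -(v / s * gaussianPDFReal m v x)
  let F' : ℝ → ℝ := fun x ↦ (x - m) / s * gaussianPDFReal m v x
  have hderiv : ∀ x ∈ Set.Ici (m + s), HasDerivAt F (F' x) x := fun x _ ↦ by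
    refine ((hasDerivAt_gaussianPDFReal m v x).const_mul (v / s : ℝ)).neg.congr_deriv ?_
    simp only [F']
    field_simp
  have hpdf_le : ∀ x ∈ Set.Ioi (m + s), gaussianPDFReal m v x ≤ F' x := fun x hx ↦
    le_mul_of_one_le_left (gaussianPDFReal_nonneg m v x)
      ((one_le_div hs).2 (by linarith [Set.mem_Ioi.1 hx]))
  have hnonneg : ∀ x ∈ Set.Ioi (m + s), 0 ≤ F' x := fun x hx ↦
    (gaussianPDFReal_nonneg m v x).trans (hpdf_le x hx)
  have hlim : Filter.Tendsto F Filter.atTop (𝓝 0) := by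
    simpa [F] using ((tendsto_gaussianPDFReal_atTop m v).const_mul (v / s : ℝ)).neg
  rw [gaussianReal_apply_eq_integral m hv]
  refine ENNReal.ofReal_le_ofReal ?_
  calc ∫ x in Set.Ioi (m + s), gaussianPDFReal m v x
      ≤ ∫ x in Set.Ioi (m + s), F' x :=
        setIntegral_mono_on (integrable_gaussianPDFReal m v).integrableOn
          (integrableOn_Ioi_deriv_of_nonneg' hderiv hnonneg hlim) measurableSet_Ioi hpdf_le
    _ = v / s * gaussianPDFReal m v (m + s) := by
        rw [integral_Ioi_of_hasDerivAt_of_nonneg' hderiv hnonneg hlim]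
        simp only [F]
        ring

lemma gaussianReal_Iio_eq_Ioi (m : ℝ) (v : ℝ≥0) (s : ℝ) :
    gaussianReal m v (Set.Iio (m - s)) = gaussianReal m v (Set.Ioi (m + s)) := by
  have hreflect : (gaussianReal m v).map (fun x ↦ 2 * m - x) = gaussianReal m v := by
    rw [gaussianReal_map_const_sub]
    congr 1
    ring
  conv_lhs => rw [← hreflect, Measure.map_apply (by fun_prop) measurableSet_Iio]
  congr 1
  ext x
  simp only [Set.mem_preimage, Set.mem_Iio, Set.mem_Ioi]
  constructor <;> intro h <;> linarith

lemma gaussianReal_abs_sub_gt_le (m : ℝ) (v : ℝ≥0) {t : ℝ} (ht : 0 < t) :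
    gaussianReal m v {x | t * √v < |x - m|} ≤
      ENNReal.ofReal (√(2 / π) * t⁻¹ * exp (-t ^ 2 / 2)) := by
  obtain rfl | hv := eq_or_ne v 0
  · simp [gaussianReal_zero_var]
  have hsplit : {x : ℝ | t * √v < |x - m|} =
      Set.Iio (m - t * √v) ∪ Set.Ioi (m + t * √v) := by
    ext x
    simp only [lt_abs, Set.mem_ofPred_eq, Set.mem_union, Set.mem_Iio, Set.mem_Ioi]
    constructor <;> rintro (h | h) <;> first | (left; linarith) | (right; linarith)
  have hvalue : v / (t * √v) * gaussianPDFReal m v (m + t * √v) =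
      (√(2 / π) * t⁻¹ * exp (-t ^ 2 / 2)) / 2 := by
    have hexponent : -(m + t * √v - m) ^ 2 / (2 * (v : ℝ)) = -t ^ 2 / 2 := by
      rw [add_sub_cancel_left, mul_pow, sq_sqrt v.coe_nonneg]
      field_simp
    rw [gaussianPDFReal, hexponent, sqrt_mul (by positivity), sqrt_mul zero_le_two,
      sqrt_div zero_le_two]
    nth_rw 1 [← sq_sqrt v.coe_nonneg]
    field_simp
    rw [sq_sqrt zero_le_two]
  have htail : gaussianReal m v (Set.Ioi (m + t * √v)) ≤
      ENNReal.ofReal ((√(2 / π) * t⁻¹ * exp (-t ^ 2 / 2)) / 2) :=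
    hvalue ▸ gaussianReal_Ioi_le m hv (by positivity)
  calc gaussianReal m v {x | t * √v < |x - m|}
      ≤ gaussianReal m v (Set.Iio (m - t * √v)) + gaussianReal m v (Set.Ioi (m + t * √v)) := by
        rw [hsplit]
        exact measure_union_le _ _
    _ ≤ _ := by
        rw [gaussianReal_Iio_eq_Ioi]
        refine (add_le_add htail htail).trans_eq ?_
        rw [← ENNReal.ofReal_add (by positivity) (by positivity), add_halves]

lemma pi_gaussianReal_map_dotProduct {ι : Type*} [Fintype ι] (w : ι → ℝ) :
    (Measure.pi fun _ : ι ↦ gaussianReal 0 1).map (fun x ↦ w ⬝ᵥ x) =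
      gaussianReal 0 (w ⬝ᵥ w).toNNReal := by
  let L := innerSL ℝ (WithLp.toLp 2 w : EuclideanSpace ℝ ι)
  have hlaw := IsGaussian.map_eq_gaussianReal (μ := stdGaussian (EuclideanSpace ℝ ι)) L
  have hL : L ∘ WithLp.toLp 2 = fun x : ι → ℝ ↦ w ⬝ᵥ x := by
    ext x
    simp [L, PiLp.inner_apply, dotProduct, mul_comm]
  have hnorm : ‖L‖ ^ 2 = w ⬝ᵥ w := by
    rw [innerSL_apply_norm, EuclideanSpace.norm_sq_eq]
    simp only [norm_eq_abs, pow_two, abs_mul_abs_self, dotProduct]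
  rwa [integral_strongDual_stdGaussian, variance_dual_stdGaussian, ← map_pi_eq_stdGaussian,
    Measure.map_map (by fun_prop) (by fun_prop), hL, hnorm] at hlaw

end GaussianTail

section Norms

variable {k n p : ℕ}

lemma sqnorm_eq_dotProduct (v : Fin k → ℝ) : sqnorm v = v ⬝ᵥ v := by
  simp only [sqnorm, dotProduct, pow_two]

lemma sqnorm_nonneg (v : Fin k → ℝ) : 0 ≤ sqnorm v :=
  sum_nonneg fun _ _ ↦ sq_nonneg _

lemma sqnorm_sub_le (u v w : Fin k → ℝ) :
    sqnorm (u - v) ≤ 2 * (sqnorm (u - w) + sqnorm (v - w)) := by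
  simp only [sqnorm, ← sum_add_distrib, mul_sum, Pi.sub_apply]
  exact sum_le_sum fun i _ ↦ by linarith [sq_nonneg (u i - w i + (v i - w i))]

lemma sqnorm_add_smul_sub (f ξ g : Fin k → ℝ) (σ : ℝ) :
    sqnorm (f + σ • ξ - g) = sqnorm (g - f) - 2 * σ * (ξ ⬝ᵥ (g - f)) + σ ^ 2 * sqnorm ξ := by
  simp only [sqnorm, dotProduct, mul_sum, ← sum_add_distrib, ← sum_sub_distrib]
  refine sum_congr rfl fun i _ ↦ ?_
  simp only [Pi.sub_apply, Pi.add_apply, Pi.smul_apply, smul_eq_mul]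
  ring

lemma frob2_nonneg (B : Matrix (Fin n) (Fin p) ℝ) : 0 ≤ frob2 B :=
  sum_nonneg fun _ _ ↦ sqnorm_nonneg _

lemma frob2_restr (B : Matrix (Fin n) (Fin p) ℝ) (M : Finset (Fin p)) :
    frob2 (restr B M) = ∑ j ∈ M, sqnorm (colv B j) := by
  rw [frob2, ← sum_subset (subset_univ M)]
  · exact sum_congr rfl fun j hj ↦ by simp [sqnorm, colv, restr, hj]
  · exact fun j _ hj ↦ by simp [sqnorm, colv, restr, hj]

lemma frob2_restr_union_le (B : Matrix (Fin n) (Fin p) ℝ) (M M' : Finset (Fin p)) :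
    frob2 (restr B (M ∪ M')) ≤ frob2 (restr B M) + frob2 (restr B M') := by
  simp only [frob2_restr, ← sum_union_inter (s₁ := M)]
  exact le_add_of_nonneg_right (sum_nonneg fun _ _ ↦ sqnorm_nonneg _)

end Norms

section NoiseEvent

/-- The event on which the oracle inequality is deterministic: against the noise vector `e`, the
correlation with each column of `B` is at most `t` of its standard deviations, the standard
deviation being the Euclidean norm of the column. -/
def CorrBounded {n p : ℕ} (B : Matrix (Fin n) (Fin p) ℝ) (t : ℝ) (e : Fin n → ℝ) : Prop :=
  ∀ j, |ip (colv B j) e| ≤ t * √(sqnorm (colv B j))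

/-- The level `√(2(δ+1) ln p)`, at which a union bound over `p` Gaussian tails costs
`p ^ (-δ)`. -/
def noiseThreshold (p : ℕ) (δ : ℝ) : ℝ := √(2 * (δ + 1) * log p)

variable {n p : ℕ} {B : Matrix (Fin n) (Fin p) ℝ} {t : ℝ} {e : Fin n → ℝ}

lemma measurable_ip (w : Fin n → ℝ) : Measurable (ip w) := by
  unfold ip
  fun_prop

lemma measurableSet_corrBounded (B : Matrix (Fin n) (Fin p) ℝ) (t : ℝ) :
    MeasurableSet {e | CorrBounded B t e} := by
  simp only [CorrBounded, Set.ofPred_forall]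
  exact .iInter fun j ↦ measurableSet_le (measurable_ip _).abs measurable_const

lemma pi_gaussianReal_abs_ip_gt_le (w : Fin n → ℝ) (ht : 0 < t) :
    (Measure.pi fun _ : Fin n ↦ gaussianReal 0 1) {e | t * √(sqnorm w) < |ip w e|} ≤
      ENNReal.ofReal (√(2 / π) * t⁻¹ * exp (-t ^ 2 / 2)) := by
  have hlaw : (Measure.pi fun _ : Fin n ↦ gaussianReal 0 1).map (ip w) =
      gaussianReal 0 (sqnorm w).toNNReal :=
    sqnorm_eq_dotProduct w ▸ pi_gaussianReal_map_dotProduct w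
  have htail := gaussianReal_abs_sub_gt_le 0 (sqnorm w).toNNReal ht
  rw [coe_toNNReal _ (sqnorm_nonneg w), ← hlaw, Measure.map_apply (measurable_ip w)
    (measurableSet_lt measurable_const (by fun_prop))] at htail
  simpa only [sub_zero, Set.preimage_ofPred_eq] using htail

lemma pi_gaussianReal_compl_corrBounded_le (B : Matrix (Fin n) (Fin p) ℝ) (ht : 0 < t) :
    (Measure.pi fun _ : Fin n ↦ gaussianReal 0 1) {e | CorrBounded B t e}ᶜ ≤
      ENNReal.ofReal (p * (√(2 / π) * t⁻¹ * exp (-t ^ 2 / 2))) := by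
  have hunion : {e | CorrBounded B t e}ᶜ =
      ⋃ j, {e | t * √(sqnorm (colv B j)) < |ip (colv B j) e|} := by
    ext e
    simp [CorrBounded]
  rw [hunion]
  calc _ ≤ ∑ _j : Fin p, ENNReal.ofReal (√(2 / π) * t⁻¹ * exp (-t ^ 2 / 2)) :=
        (measure_iUnion_fintype_le _ _).trans
          (sum_le_sum fun j _ ↦ pi_gaussianReal_abs_ip_gt_le (colv B j) ht)
    _ = _ := by
        rw [sum_const, card_univ, Fintype.card_fin, nsmul_eq_mul,
          ENNReal.ofReal_mul p.cast_nonneg, ENNReal.ofReal_natCast]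

variable {δ : ℝ}

lemma noiseThreshold_sq (hδ : 0 ≤ δ) : noiseThreshold p δ ^ 2 = 2 * (δ + 1) * log p :=
  sq_sqrt (by positivity)

lemma one_le_noiseThreshold (hp : 2 ≤ p) (hδ : 0 ≤ δ) : 1 ≤ noiseThreshold p δ := by
  have hlog : 1 / 2 ≤ log p :=
    (by linarith [log_two_gt_d9] : 1 / 2 ≤ log 2).trans
      (log_le_log two_pos (by exact_mod_cast hp))
  rw [noiseThreshold, one_le_sqrt]
  nlinarith

lemma natCast_mul_exp_noiseThreshold (hp : 0 < p) (hδ : 0 ≤ δ) :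
    p * exp (-noiseThreshold p δ ^ 2 / 2) = (p : ℝ) ^ (-δ) := by
  have hp' : (0 : ℝ) < p := by exact_mod_cast hp
  rw [noiseThreshold_sq hδ, rpow_def_of_pos hp']
  nth_rw 1 [← exp_log hp']
  rw [← exp_add]
  congr 1
  ring

lemma ofReal_le_pi_gaussianReal_corrBounded (hp : 2 ≤ p) (hδ : 0 ≤ δ)
    (B : Matrix (Fin n) (Fin p) ℝ) :
    ENNReal.ofReal (1 - √(2 / π) * (p : ℝ) ^ (-δ)) ≤
      (Measure.pi fun _ : Fin n ↦ gaussianReal 0 1)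
        {e | CorrBounded B (noiseThreshold p δ) e} := by
  set t := noiseThreshold p δ with ht_def
  have ht : 1 ≤ t := one_le_noiseThreshold hp hδ
  have hbad : p * (√(2 / π) * t⁻¹ * exp (-t ^ 2 / 2)) ≤ √(2 / π) * (p : ℝ) ^ (-δ) := by
    calc p * (√(2 / π) * t⁻¹ * exp (-t ^ 2 / 2))
        = √(2 / π) * t⁻¹ * (p * exp (-t ^ 2 / 2)) := by ring
      _ ≤ √(2 / π) * 1 * (p * exp (-t ^ 2 / 2)) := by
        gcongr
        exact inv_le_one_of_one_le₀ ht
      _ = √(2 / π) * (p : ℝ) ^ (-δ) := by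
        rw [mul_one, ht_def, natCast_mul_exp_noiseThreshold (by omega) hδ]
  rw [ENNReal.ofReal_sub _ (by positivity), ENNReal.ofReal_one, tsub_le_iff_right,
    ← prob_add_prob_compl (μ := Measure.pi fun _ : Fin n ↦ gaussianReal 0 1)
      (measurableSet_corrBounded B t)]
  gcongr
  exact (pi_gaussianReal_compl_corrBounded_le B (by positivity)).trans
    (ENNReal.ofReal_le_ofReal hbad)

lemma CorrBounded.sq_ip_le (he : CorrBounded B t e) (j : Fin p) :
    ip (colv B j) e ^ 2 ≤ t ^ 2 * sqnorm (colv B j) := by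
  have h := pow_le_pow_left₀ (abs_nonneg _) (he j) 2
  rwa [sq_abs, mul_pow, sq_sqrt (sqnorm_nonneg _)] at h

lemma CorrBounded.sq_dotProduct_mulVec_le (he : CorrBounded B t e) {S : Finset (Fin p)}
    {x : Fin p → ℝ} (hx : ∀ j ∉ S, x j = 0) :
    (e ⬝ᵥ B *ᵥ x) ^ 2 ≤ sqnorm x * (t ^ 2 * frob2 (restr B S)) := by
  have hdot : e ⬝ᵥ B *ᵥ x = ∑ j ∈ S, x j * ip (colv B j) e := by
    rw [dotProduct_mulVec, dotProduct_comm, dotProduct,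
      sum_subset (subset_univ S) fun j _ hj ↦ by rw [hx j hj, zero_mul]]
    exact sum_congr rfl fun j _ ↦ congrArg (x j * ·) (dotProduct_comm e (colv B j))
  rw [hdot, frob2_restr, mul_sum]
  calc (∑ j ∈ S, x j * ip (colv B j) e) ^ 2
      ≤ (∑ j ∈ S, x j ^ 2) * ∑ j ∈ S, ip (colv B j) e ^ 2 := sum_mul_sq_le_sq_mul_sq _ _ _
    _ ≤ sqnorm x * ∑ j ∈ S, t ^ 2 * sqnorm (colv B j) := by
        gcongr with j
        · exact sqnorm_nonneg x
        · exact sum_le_sum_of_subset_of_nonneg (subset_univ S) fun _ _ _ ↦ sq_nonneg _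
        · exact he.sq_ip_le j

end NoiseEvent

section LeastSquares

variable {n m p : ℕ}

lemma isUnit_det_transpose_mul_self {A : Matrix (Fin n) (Fin m) ℝ} (hrank : A.rank = m) :
    IsUnit (Aᵀ * A).det := by
  rw [← isUnit_iff_isUnit_det, ← linearIndependent_cols_iff_isUnit,
    linearIndependent_iff_card_eq_finrank_span, Set.finrank, ← rank_eq_finrank_span_cols,
    rank_transpose_mul_self, hrank, Fintype.card_fin]

lemma zv_eq_add_smul_xiv {A : Matrix (Fin n) (Fin m) ℝ} (hrank : A.rank = m) (f : Fin m → ℝ)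
    (σ : ℝ) (e : Fin n → ℝ) : zv A f σ e = f + σ • xiv A e := by
  rw [zv, xiv, mulVec_add, mulVec_smul, mulVec_mulVec, Matrix.mul_assoc,
    nonsing_inv_mul _ (isUnit_det_transpose_mul_self hrank), one_mulVec]

lemma xiv_dotProduct_mulVec (A : Matrix (Fin n) (Fin m) ℝ) (Φ : Matrix (Fin m) (Fin p) ℝ)
    (e : Fin n → ℝ) (x : Fin p → ℝ) : xiv A e ⬝ᵥ Φ *ᵥ x = e ⬝ᵥ Psi A Φ *ᵥ x := by
  have htranspose : (Aᵀ * A)⁻¹ * Aᵀ = (A * (Aᵀ * A)⁻¹)ᵀ := by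
    rw [transpose_mul, transpose_nonsing_inv, transpose_mul, transpose_transpose]
  rw [xiv, htranspose, mulVec_transpose, ← dotProduct_mulVec, mulVec_mulVec, Psi]

variable {Φ : Matrix (Fin m) (Fin p) ℝ} {M : Finset (Fin p)} {H : Matrix (Fin m) (Fin m) ℝ}

lemma IsProjOnto.sqnorm_sub_mulVec_le (hH : IsProjOnto Φ M H) (z f : Fin m → ℝ) :
    sqnorm (z - H *ᵥ z) ≤ sqnorm (z - H *ᵥ f) := by
  obtain ⟨hsymm, hidem, -⟩ := hH
  have hsplit : z - H *ᵥ f = (z - H *ᵥ z) + H *ᵥ (z - f) := by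
    rw [mulVec_sub]
    abel
  have horth : (z - H *ᵥ z) ⬝ᵥ H *ᵥ (z - f) = 0 := by
    rw [dotProduct_mulVec, ← mulVec_transpose, hsymm.eq, mulVec_sub, mulVec_mulVec, hidem,
      sub_self, zero_dotProduct]
  have hpythagoras : sqnorm (z - H *ᵥ f) = sqnorm (z - H *ᵥ z) + sqnorm (H *ᵥ (z - f)) := by
    simp only [hsplit, sqnorm_eq_dotProduct, add_dotProduct, dotProduct_add, horth,
      dotProduct_comm (H *ᵥ (z - f)) (z - H *ᵥ z)]
    ring
  linarith [sqnorm_nonneg (H *ᵥ (z - f))]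

lemma IsProjOnto.exists_mulVec_eq (hH : IsProjOnto Φ M H) (z : Fin m → ℝ) :
    ∃ x : Fin p → ℝ, (∀ j ∉ M, x j = 0) ∧ H *ᵥ z = Φ *ᵥ x := by
  have hmem : H *ᵥ z ∈ Submodule.span ℝ (colv Φ '' (M : Set (Fin p))) := by
    rw [← hH.2.2]
    exact ⟨z, rfl⟩
  obtain ⟨c, hc⟩ := (Submodule.mem_span_image_finset_iff_exists_fun' ℝ).1 hmem
  refine ⟨fun j ↦ if j ∈ M then c j else 0, fun j hj ↦ if_neg hj, ?_⟩
  rw [← hc]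
  ext i
  simp [mulVec, dotProduct, colv, mul_comm]

end LeastSquares

section OracleInequality

variable {n m p r : ℕ} {A : Matrix (Fin n) (Fin m) ℝ} {Φ : Matrix (Fin m) (Fin p) ℝ}
  {ν2 t : ℝ} {e : Fin n → ℝ} {M M' : Finset (Fin p)}

lemma sparse_of_mem_models (hM : M ∈ models p r) (hM' : M' ∈ models p r) {x : Fin p → ℝ}
    (hx : ∀ j ∉ M ∪ M', x j = 0) : sparse r x := by
  have hsupp : Function.support x ⊆ (M ∪ M' : Finset (Fin p)) := fun j hj ↦
    by_contra fun hj' ↦ hj (hx j hj')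
  have hcard := Set.ncard_le_ncard hsupp (finite_toSet _)
  rw [Set.ncard_coe_finset] at hcard
  simp only [models, mem_filter_univ] at hM hM'
  have hunion := card_union_le M M'
  unfold sparse
  omega

lemma sq_xiv_dotProduct_mulVec_le (hν2 : 0 < ν2) (he : CorrBounded (Psi A Φ) t e)
    {x : Fin p → ℝ} (hx : ∀ j ∉ M, x j = 0) (hxΦ : ν2 * sqnorm x ≤ sqnorm (Φ *ᵥ x)) :
    (xiv A e ⬝ᵥ Φ *ᵥ x) ^ 2 ≤
      sqnorm (Φ *ᵥ x) * (t ^ 2 * frob2 (restr (Psi A Φ) M) / ν2) := by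
  have hF := frob2_nonneg (restr (Psi A Φ) M)
  calc (xiv A e ⬝ᵥ Φ *ᵥ x) ^ 2
      ≤ sqnorm x * (t ^ 2 * frob2 (restr (Psi A Φ) M)) := by
        rw [xiv_dotProduct_mulVec]
        exact he.sq_dotProduct_mulVec_le hx
    _ = ν2 * sqnorm x * (t ^ 2 * frob2 (restr (Psi A Φ) M) / ν2) := by field_simp
    _ ≤ _ := by gcongr

lemma two_mul_noise_term_le {a σ : ℝ} (ha : 0 < a) (hν2 : 0 < ν2)
    (hν2min : ∀ x : Fin p → ℝ, x ≠ 0 → sparse r x → ν2 * sqnorm x ≤ sqnorm (Φ *ᵥ x))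
    (he : CorrBounded (Psi A Φ) t e) (hM : M ∈ models p r) (hM' : M' ∈ models p r)
    {x : Fin p → ℝ} (hx : ∀ j ∉ M ∪ M', x j = 0) :
    2 * (σ * (xiv A e ⬝ᵥ Φ *ᵥ x)) ≤ a / 2 * sqnorm (Φ *ᵥ x) +
      2 * σ ^ 2 * t ^ 2 / (a * ν2) *
        (frob2 (restr (Psi A Φ) M) + frob2 (restr (Psi A Φ) M')) := by
  have hxΦ : ν2 * sqnorm x ≤ sqnorm (Φ *ᵥ x) := by
    obtain rfl | hx0 := eq_or_ne x 0
    · simp [sqnorm]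
    · exact hν2min x hx0 (sparse_of_mem_models hM hM' hx)
  have hsq := sq_xiv_dotProduct_mulVec_le hν2 he hx hxΦ
  have hΦx := sqnorm_nonneg (Φ *ᵥ x)
  have hF := frob2_nonneg (restr (Psi A Φ) (M ∪ M'))
  calc 2 * (σ * (xiv A e ⬝ᵥ Φ *ᵥ x))
      ≤ a / 2 * sqnorm (Φ *ᵥ x) +
          2 * σ ^ 2 * t ^ 2 / (a * ν2) * frob2 (restr (Psi A Φ) (M ∪ M')) := by
        refine two_mul_le_add_of_sq_le_mul (by positivity) (by positivity) ?_
        calc (σ * (xiv A e ⬝ᵥ Φ *ᵥ x)) ^ 2 = σ ^ 2 * (xiv A e ⬝ᵥ Φ *ᵥ x) ^ 2 := mul_pow _ _ _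
          _ ≤ σ ^ 2 * (sqnorm (Φ *ᵥ x) * (t ^ 2 * frob2 (restr (Psi A Φ) (M ∪ M')) / ν2)) := by
            gcongr
          _ = _ := by field_simp
    _ ≤ _ := by
        gcongr
        exact frob2_restr_union_le _ _ _

lemma sqnorm_sub_add_le_of_penalized_le {k : ℕ} {f ξ g g' : Fin k → ℝ} {σ P P' : ℝ}
    (h : sqnorm (f + σ • ξ - g') + P' ≤ sqnorm (f + σ • ξ - g) + P) :
    sqnorm (g' - f) + P' ≤ sqnorm (g - f) + 2 * (σ * (ξ ⬝ᵥ (g' - g))) + P := by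
  rw [sqnorm_add_smul_sub, sqnorm_add_smul_sub] at h
  simp only [dotProduct_sub] at h ⊢
  linarith

lemma one_sub_mul_risk_le_of_corrBounded (hrank : A.rank = m) {a σ : ℝ} (ha : 0 < a)
    (hν2 : 0 < ν2)
    (hν2min : ∀ x : Fin p → ℝ, x ≠ 0 → sparse r x → ν2 * sqnorm x ≤ sqnorm (Φ *ᵥ x))
    (he : CorrBounded (Psi A Φ) t e) {H : Finset (Fin p) → Matrix (Fin m) (Fin m) ℝ}
    {Pen : Finset (Fin p) → ℝ} {f : Fin m → ℝ}
    (hM : M ∈ models p r) (hH : IsProjOnto Φ M (H M))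
    (hPen : 2 * σ ^ 2 * t ^ 2 / (a * ν2) * frob2 (restr (Psi A Φ) M) ≤ Pen M)
    (hM' : M' ∈ models p r) (hH' : IsProjOnto Φ M' (H M'))
    (hPen' : 2 * σ ^ 2 * t ^ 2 / (a * ν2) * frob2 (restr (Psi A Φ) M') ≤ Pen M')
    (hmin : sqnorm (zv A f σ e - H M' *ᵥ zv A f σ e) + Pen M' ≤
      sqnorm (zv A f σ e - H M *ᵥ zv A f σ e) + Pen M) :
    (1 - a) * sqnorm (H M' *ᵥ zv A f σ e - f) ≤
      (1 + a) * sqnorm (H M *ᵥ f - f) + 2 * Pen M := by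
  obtain ⟨x', hx', hx'_eq⟩ := hH'.exists_mulVec_eq (zv A f σ e)
  obtain ⟨x, hx, hx_eq⟩ := hH.exists_mulVec_eq f
  have hcompare := hmin.trans (add_le_add_left (hH.sqnorm_sub_mulVec_le (zv A f σ e) f) (Pen M))
  set g' := H M' *ᵥ zv A f σ e
  set g := H M *ᵥ f
  rw [zv_eq_add_smul_xiv hrank] at hcompare
  have hbasic := sqnorm_sub_add_le_of_penalized_le hcompare
  have hdiff : g' - g = Φ *ᵥ (x' - x) := by rw [mulVec_sub, hx'_eq, hx_eq]
  have hsupp : ∀ j ∉ M ∪ M', (x' - x) j = 0 := fun j hj ↦ by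
    rw [mem_union, not_or] at hj
    rw [Pi.sub_apply, hx j hj.1, hx' j hj.2, sub_zero]
  have hnoise := two_mul_noise_term_le (σ := σ) ha hν2 hν2min he hM hM' hsupp
  rw [← hdiff, mul_add] at hnoise
  have hsplit : a / 2 * sqnorm (g' - g) ≤ a * (sqnorm (g' - f) + sqnorm (g - f)) :=
    (mul_le_mul_of_nonneg_left (sqnorm_sub_le g' g f) (by positivity)).trans_eq (by ring)
  linarith

end OracleInequality

theorem oracle_model_selection_high_probability_general
    {n m p r : ℕ} (hp : 2 ≤ p)
    (A : Matrix (Fin n) (Fin m) ℝ) (hrank : A.rank = m)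
    (Φ : Matrix (Fin m) (Fin p) ℝ)
    (σ : ℝ) (δ : ℝ) (hδ : 0 ≤ δ) (a : ℝ) (ha0 : 0 < a) (ha1 : a < 1)
    (ν2 : ℝ) (hν2 : 0 < ν2)
    (hν2min : ∀ x : Fin p → ℝ, x ≠ 0 → sparse r x → ν2 * sqnorm x ≤ sqnorm (Φ.mulVec x))
    (H : Finset (Fin p) → Matrix (Fin m) (Fin m) ℝ)
    (hH : ∀ M ∈ models p r, IsProjOnto Φ M (H M))
    {Ω : Type*} [MeasurableSpace Ω] (μ : Measure Ω)
    (ε : Ω → Fin n → ℝ) (hεmeas : Measurable ε)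
    (hεdist : Measure.map ε μ = Measure.pi fun _ : Fin n => gaussianReal 0 1)
    (f : Fin m → ℝ)
    (Pen : Finset (Fin p) → ℝ)
    (hPen : ∀ M ∈ models p r,
      4 * σ ^ 2 * (δ + 1) / (a * ν2) * frob2 (restr (Psi A Φ) M) * log p ≤ Pen M)
    (Mhat : Ω → Finset (Fin p))
    (hMhatMem : ∀ ω, Mhat ω ∈ models p r)
    (hMhatMin : ∀ ω, ∀ M ∈ models p r,
      sqnorm (zv A f σ (ε ω) - (H (Mhat ω)).mulVec (zv A f σ (ε ω))) + Pen (Mhat ω) ≤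
        sqnorm (zv A f σ (ε ω) - (H M).mulVec (zv A f σ (ε ω))) + Pen M) :
    ENNReal.ofReal (1 - √(2 / π) * (p : ℝ) ^ (-δ)) ≤
      μ {ω | ∀ M ∈ models p r,
        sqnorm ((H (Mhat ω)).mulVec (zv A f σ (ε ω)) - f) ≤
          (1 + a) / (1 - a) * (sqnorm ((H M).mulVec f - f) + 2 / (1 + a) * Pen M)} := by
  set t := noiseThreshold p δ
  have hPen_t : ∀ M ∈ models p r,
      2 * σ ^ 2 * t ^ 2 / (a * ν2) * frob2 (restr (Psi A Φ) M) ≤ Pen M := fun M hM ↦ by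
    rw [noiseThreshold_sq hδ]
    exact (hPen M hM).trans_eq' (by ring)
  have hgood := ofReal_le_pi_gaussianReal_corrBounded hp hδ (Psi A Φ)
  rw [← hεdist, Measure.map_apply hεmeas (measurableSet_corrBounded _ _)] at hgood
  refine hgood.trans (measure_mono fun ω hω M hM ↦ ?_)
  have hM' := hMhatMem ω
  have hrisk := one_sub_mul_risk_le_of_corrBounded hrank ha0 hν2 hν2min hω
    hM (hH M hM) (hPen_t M hM) hM' (hH _ hM') (hPen_t _ hM') (hMhatMin ω M hM)
  have h1a : 0 < 1 - a := sub_pos.2 ha1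
  rw [← mul_le_mul_iff_right₀ h1a]
  exact hrisk.trans_eq (by field_simp)

/-- Theorem 1, part 1 (oracle inequality with high probability for the penalized
empirical risk model-selection estimator). -/
theorem oracle_model_selection_high_probability
    {n m p r : ℕ} (hp : 2 ≤ p) (hmn : m ≤ n)
    (A : Matrix (Fin n) (Fin m) ℝ) (hrank : A.rank = m)
    (Φ : Matrix (Fin m) (Fin p) ℝ) (hΦnorm : ∀ j, sqnorm (colv Φ j) = 1)
    (σ : ℝ) (hσ : 0 < σ) (δ : ℝ) (hδ : 0 < δ) (a : ℝ) (ha0 : 0 < a) (ha1 : a < 1)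
    (ν2 : ℝ) (hν2 : 0 < ν2)
    (hν2min : ∀ x : Fin p → ℝ, x ≠ 0 → sparse r x → ν2 * sqnorm x ≤ sqnorm (Φ.mulVec x))
    (H : Finset (Fin p) → Matrix (Fin m) (Fin m) ℝ)
    (hH : ∀ M : Finset (Fin p), IsProjOnto Φ M (H M))
    {Ω : Type*} [MeasurableSpace Ω] (μ : Measure Ω) [IsProbabilityMeasure μ]
    (ε : Ω → Fin n → ℝ) (hεmeas : Measurable ε)
    (hεdist : Measure.map ε μ = Measure.pi fun _ : Fin n => gaussianReal 0 1)
    (f : Fin m → ℝ)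
    (Pen : Finset (Fin p) → ℝ)
    (hPen : ∀ M ∈ models p r,
      4 * σ ^ 2 * (δ + 1) / (a * ν2) * frob2 (restr (Psi A Φ) M) * Real.log p ≤ Pen M)
    (Mhat : Ω → Finset (Fin p))
    (hMhatMem : ∀ ω, Mhat ω ∈ models p r)
    (hMhatMin : ∀ ω, ∀ M ∈ models p r,
      sqnorm (zv A f σ (ε ω) - (H (Mhat ω)).mulVec (zv A f σ (ε ω))) + Pen (Mhat ω) ≤
        sqnorm (zv A f σ (ε ω) - (H M).mulVec (zv A f σ (ε ω))) + Pen M) :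
    ENNReal.ofReal (1 - Real.sqrt (2 / Real.pi) * (p : ℝ) ^ (-δ)) ≤
      μ {ω | ∀ M ∈ models p r,
        sqnorm ((H (Mhat ω)).mulVec (zv A f σ (ε ω)) - f) ≤
          (1 + a) / (1 - a) *
            (sqnorm ((H M).mulVec f - f) + (a ^ 2 + a + 4) / (2 * (1 + a)) * Pen M)} := by
  refine (oracle_model_selection_high_probability_general hp A hrank Φ σ δ hδ.le a ha0 ha1 ν2 hν2
    hν2min H (fun M _ ↦ hH M) μ ε hεmeas hεdist f Pen hPen Mhat hMhatMem hMhatMin).trans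
    (measure_mono fun ω hω M hM ↦ (hω M hM).trans ?_)
  have hF := frob2_nonneg (restr (Psi A Φ) M)
  have hPen_nonneg : 0 ≤ Pen M := le_trans (by positivity) (hPen M hM)
  have hconst : 2 / (1 + a) ≤ (a ^ 2 + a + 4) / (2 * (1 + a)) := by
    rw [div_le_div_iff₀ (by positivity) (by positivity)]
    nlinarith
  exact mul_le_mul_of_nonneg_left
    (add_le_add_right (mul_le_mul_of_nonneg_right hconst hPen_nonneg) _)
    (div_nonneg (by positivity) (sub_nonneg.2 ha1.le))
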